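/- There exists a universal constant c₁ > 0 such that for every positive integer n, every vector w ∈ ℝⁿ, and every real t > 0, if x is uniformly distributed on {−1,+1}ⁿ, then the probability that ⟨w, x⟩ > c₁·F(w,t) is at most e^{−t²/2}. -/

import Mathlib

open Finset
open scoped Classical

/-- `F(w,t)` computed with respect to a permutation `σ` ordering the coordinates of `w`
by decreasing absolute value. -/
noncomputable def Fval {n : ℕ} (w : Fin n → ℝ) (σ : Equiv.Perm (Fin n)) (t : ℝ) : ℝ :=
  (∑ j ∈ Finset.univ.filter (fun j : Fin n => (j : ℕ) < ⌊t ^ 2⌋₊), |w (σ j)|) +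
    t * Real.sqrt (∑ j ∈ Finset.univ.filter (fun j : Fin n => ⌊t ^ 2⌋₊ ≤ (j : ℕ)), (w (σ j)) ^ 2)

/-- The exponential moment of a Rademacher sum is at most that of a Gaussian of the same variance. -/
theorem sum_exp_rademacher_le {n : ℕ} (v : Fin n → ℝ) (l : ℝ) :
    ∑ x : Fin n → ({-1, 1} : Finset ℝ), Real.exp (l * ∑ i, v i * (x i : ℝ)) ≤
      2 ^ n * Real.exp (l ^ 2 * (∑ i, v i ^ 2) / 2) := by
  have hfactor : ∑ x : Fin n → ({-1, 1} : Finset ℝ), Real.exp (l * ∑ i, v i * (x i : ℝ)) =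
      ∏ i, ∑ s : ({-1, 1} : Finset ℝ), Real.exp (l * (v i * (s : ℝ))) := by
    rw [Finset.prod_univ_sum, Fintype.piFinset_univ]
    refine Finset.sum_congr rfl fun x _ => ?_
    rw [← Real.exp_sum, Finset.mul_sum]
  have hcosh : ∀ i, ∑ s : ({-1, 1} : Finset ℝ), Real.exp (l * (v i * (s : ℝ))) =
      2 * Real.cosh (l * v i) := by
    intro i
    rw [Finset.sum_coe_sort ({-1, 1} : Finset ℝ) (fun s => Real.exp (l * (v i * s))),
      Finset.sum_pair (by norm_num), Real.cosh_eq]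
    ring_nf
  calc _ = ∏ i, (2 * Real.cosh (l * v i)) := by rw [hfactor]; simp_rw [hcosh]
    _ ≤ ∏ i, (2 * Real.exp ((l * v i) ^ 2 / 2)) := by
        refine Finset.prod_le_prod (fun i _ => by positivity) fun i _ => ?_
        gcongr
        exact Real.cosh_le_exp_half_sq _
    _ = 2 ^ n * Real.exp (l ^ 2 * (∑ i, v i ^ 2) / 2) := by
        rw [Finset.prod_mul_distrib, ← Real.exp_sum, Finset.mul_sum, Finset.sum_div]
        simp [mul_pow]

/-- Hoeffding's inequality for Rademacher sums, in counting form. -/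
theorem card_rademacher_sum_gt_le {n : ℕ} (v : Fin n → ℝ) {t : ℝ} (ht : 0 < t) :
    ((Finset.univ.filter (fun x : Fin n → ({-1, 1} : Finset ℝ) =>
        t * √(∑ i, v i ^ 2) < ∑ i, v i * (x i : ℝ))).card : ℝ) ≤
      2 ^ n * Real.exp (-(t ^ 2) / 2) := by
  set V := ∑ i, v i ^ 2 with hV
  have hV0 : 0 ≤ V := Finset.sum_nonneg fun i _ => sq_nonneg _
  rcases hV0.eq_or_lt with hzero | hpos
  · have hv : ∀ i, v i = 0 := fun i => by
      have := (Finset.sum_eq_zero_iff_of_nonneg fun i _ => sq_nonneg (v i)).1 hzero.symm i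
        (Finset.mem_univ i)
      exact pow_eq_zero_iff two_ne_zero |>.1 this
    rw [Finset.filter_false_of_mem]
    · simp only [Finset.card_empty, Nat.cast_zero]
      positivity
    · simp [hv, ← hzero]
  · have hs : 0 < √V := Real.sqrt_pos.2 hpos
    have hsq : √V ^ 2 = V := Real.sq_sqrt hV0
    have hmarkov : ((Finset.univ.filter (fun x : Fin n → ({-1, 1} : Finset ℝ) =>
        t * √V < ∑ i, v i * (x i : ℝ))).card : ℝ) * Real.exp (t ^ 2) ≤
        ∑ x : Fin n → ({-1, 1} : Finset ℝ), Real.exp (t / √V * ∑ i, v i * (x i : ℝ)) := by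
      rw [← nsmul_eq_mul]
      refine (Finset.card_nsmul_le_sum _ _ _ fun x hx => ?_).trans
        (Finset.sum_le_sum_of_subset_of_nonneg (Finset.filter_subset _ _)
          fun x _ _ => (Real.exp_pos _).le)
      have hx := (Finset.mem_filter.1 hx).2
      rw [Real.exp_le_exp]
      calc t ^ 2 = t / √V * (t * √V) := by field_simp
        _ ≤ _ := by gcongr
    have hmgf := sum_exp_rademacher_le v (t / √V)
    have hexp : (t / √V) ^ 2 * V / 2 = -(t ^ 2) / 2 + t ^ 2 := by
      rw [div_pow, hsq]
      field_simp
      ring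
    rw [← hV, hexp, Real.exp_add, ← mul_assoc] at hmgf
    exact le_of_mul_le_mul_right (hmarkov.trans hmgf) (Real.exp_pos _)

/-- Rademacher upper tail bound: for `x` uniform on `{-1,+1}ⁿ`,
`Pr[⟨w,x⟩ > c₁ F(w,t)] ≤ e^{-t²/2}`. -/
theorem rademacher_upper_tail :
    ∃ c₁ : ℝ, 0 < c₁ ∧
      ∀ (n : ℕ) (w : Fin n → ℝ) (t : ℝ), 0 < t →
        ∀ σ : Equiv.Perm (Fin n), (∀ j k : Fin n, j ≤ k → |w (σ k)| ≤ |w (σ j)|) →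
          ((Finset.univ.filter (fun x : Fin n → ({-1, 1} : Finset ℝ) =>
              c₁ * Fval w σ t < ∑ i, w i * (x i : ℝ))).card : ℝ) /
            ((Finset.univ : Finset (Fin n → ({-1, 1} : Finset ℝ))).card : ℝ) ≤
          Real.exp (-(t ^ 2) / 2) := by
  refine ⟨1, one_pos, fun n w t ht σ _ => ?_⟩
  have hcard : ((Finset.univ : Finset (Fin n → ({-1, 1} : Finset ℝ))).card : ℝ) = 2 ^ n := by
    have hpair : (({-1, 1} : Finset ℝ)).card = 2 := Finset.card_pair (by norm_num)
    rw [Finset.card_univ, Fintype.card_fun, Fintype.card_coe, hpair, Fintype.card_fin]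
    norm_cast
  rw [hcard, div_le_iff₀ (by positivity), mul_comm (Real.exp _)]
  -- Bound the largest coordinates trivially and apply Hoeffding to the remaining ones.
  let v : Fin n → ℝ := fun i => if ⌊t ^ 2⌋₊ ≤ (σ.symm i : ℕ) then w i else 0
  refine le_trans ?_ (card_rademacher_sum_gt_le v ht)
  refine Nat.cast_le.2 (Finset.card_le_card (Finset.monotone_filter_right _ fun x _ hx => ?_))
  have hvar : ∑ i, v i ^ 2 =
      ∑ j ∈ Finset.univ.filter (fun j : Fin n => ⌊t ^ 2⌋₊ ≤ (j : ℕ)), w (σ j) ^ 2 := by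
    rw [← Equiv.sum_comp σ, Finset.sum_filter]
    simp [v, ite_pow]
  have hhead : ∑ i, w i * (x i : ℝ) - ∑ i, v i * (x i : ℝ) ≤
      ∑ j ∈ Finset.univ.filter (fun j : Fin n => (j : ℕ) < ⌊t ^ 2⌋₊), |w (σ j)| := by
    rw [← Finset.sum_sub_distrib, ← Equiv.sum_comp σ, Finset.sum_filter]
    refine Finset.sum_le_sum fun j _ => ?_
    have hx1 : |(x (σ j) : ℝ)| = 1 := by
      have hmem := (x (σ j)).2
      rw [Finset.mem_insert, Finset.mem_singleton] at hmem
      rcases hmem with h | h <;> simp [h]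
    by_cases hj : (j : ℕ) < ⌊t ^ 2⌋₊
    · simpa [v, hj, not_le.2 hj, abs_mul, hx1] using le_abs_self (w (σ j) * (x (σ j) : ℝ))
    · simp [v, hj, not_lt.1 hj]
  rw [Fval, one_mul, ← hvar] at hx
  linarith
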